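/- The measure μ is hemifinite if and only if the space M_F is first countable. -/

import Mathlib

open MeasureTheory Topology Set Pointwise

/-- The set of all real-valued measurable functions on `X`, as a subtype. -/
abbrev Mble (X : Type*) [MeasurableSpace X] : Type _ := {f : X → ℝ // Measurable f}

/-- The basic set `B(f, A, ε)`: all `g` such that for some measurable null set `N`,
`sup_{x ∈ A \ N} |f x - g x| < ε`. -/
def FBall {X : Type*} [MeasurableSpace X] (μ : Measure X) (f : Mble X) (A : Set X)
    (ε : ℝ) : Set (Mble X) :=
  {g | ∃ N : Set X, MeasurableSet N ∧ μ N = 0 ∧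
        ∃ b : ℝ, b < ε ∧ ∀ x ∈ A \ N, |f.1 x - g.1 x| ≤ b}

/-- The `F_μ`-topology on `Mble X`, generated by the sets `B(f, A, ε)` with
`A` measurable of finite measure and `ε > 0`. -/
def FTop {X : Type*} [MeasurableSpace X] (μ : Measure X) : TopologicalSpace (Mble X) :=
  TopologicalSpace.generateFrom
    {S | ∃ (f : Mble X) (A : Set X) (ε : ℝ),
        MeasurableSet A ∧ μ A < ⊤ ∧ 0 < ε ∧ S = FBall μ f A ε}

/-- A `μ`-atom: a measurable set of positive measure admitting no decomposition into two
disjoint measurable pieces of positive measure. -/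
def MuAtom {X : Type*} [MeasurableSpace X] (μ : Measure X) (A : Set X) : Prop :=
  MeasurableSet A ∧ 0 < μ A ∧
    ¬ ∃ B C : Set X, MeasurableSet B ∧ MeasurableSet C ∧ Disjoint B C ∧
        B ∪ C = A ∧ 0 < μ B ∧ 0 < μ C

/-- `G` is a union of finitely many `μ`-atoms. -/
def FinAtomUnion {X : Type*} [MeasurableSpace X] (μ : Measure X) (G : Set X) : Prop :=
  ∃ (n : ℕ) (F : Fin n → Set X), (∀ i, MuAtom μ (F i)) ∧ G = ⋃ i, F i

/-- `L^∞_G`: the measurable functions that are essentially bounded on `G`. -/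
def Linf {X : Type*} [MeasurableSpace X] (μ : Measure X) (G : Set X) : Set (Mble X) :=
  {f | ∃ M₀ : ℝ, 0 < M₀ ∧ ∃ N : Set X, MeasurableSet N ∧ μ N = 0 ∧
        ∀ x ∈ G \ N, |f.1 x| ≤ M₀}

/-- The intersection `⋂_{G ∈ 𝒜_>} L^∞_G`. -/
def InterLinf {X : Type*} [MeasurableSpace X] (μ : Measure X) : Set (Mble X) :=
  ⋂ G ∈ {A : Set X | MeasurableSet A ∧ 0 < μ A ∧ μ A < ⊤}, Linf μ G

/-- The zero function as an element of `Mble X`. -/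
def zeroM {X : Type*} [MeasurableSpace X] : Mble X := ⟨fun _ => 0, measurable_const⟩

/-- `μ` is hemifinite: some sequence in `𝒜_>` almost contains every member of `𝒜_>`. -/
def Hemifinite {X : Type*} [MeasurableSpace X] (μ : Measure X) : Prop :=
  ∃ A : ℕ → Set X, (∀ n, MeasurableSet (A n) ∧ 0 < μ (A n) ∧ μ (A n) < ⊤) ∧
    ∀ F : Set X, MeasurableSet F → 0 < μ F → μ F < ⊤ → ∃ n, μ (F \ A n) = 0

/-- `G⁺`: functions strictly positive μ-almost everywhere on `G`. -/
def Gplus {X : Type*} [MeasurableSpace X] (μ : Measure X) (G : Set X) : Set (Mble X) :=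
  {f | ∃ N : Set X, MeasurableSet N ∧ μ N = 0 ∧ ∀ x ∈ G \ N, 0 < f.1 x}

/-- `G⁰`: functions nonnegative μ-almost everywhere on `G`. -/
def Gzero {X : Type*} [MeasurableSpace X] (μ : Measure X) (G : Set X) : Set (Mble X) :=
  {f | ∃ N : Set X, MeasurableSet N ∧ μ N = 0 ∧ ∀ x ∈ G \ N, 0 ≤ f.1 x}

instance {X : Type*} [MeasurableSpace X] : Add (Mble X) :=
  ⟨fun f g => ⟨f.1 + g.1, f.2.add g.2⟩⟩

/-!
The set `FBall μ f A ε` shrinks as `A` grows modulo null sets. Conversely, the function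
`f + δ • 1_{Aᶜ}` belongs to every `FBall μ f A ε` but can belong to `FBall μ f F δ` only if
`F ⊆ A` almost everywhere. Comparing neighbourhoods of `f` therefore amounts to comparing sets of
finite measure up to null sets, and countable neighbourhood bases correspond to sequences that are
cofinal among these sets.
-/

section FBall

variable {X : Type*} [MeasurableSpace X] {μ : Measure X} {f g : Mble X} {A F : Set X} {δ ε : ℝ}

theorem mem_FBall_iff_ae :
    g ∈ FBall μ f A ε ↔ ∃ b < ε, ∀ᵐ x ∂μ, x ∈ A → |f.1 x - g.1 x| ≤ b := by
  constructor
  · rintro ⟨N, -, hN, b, hb, hfg⟩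
    refine ⟨b, hb, ?_⟩
    filter_upwards [measure_eq_zero_iff_ae_notMem.1 hN] with x hxN hxA using hfg x ⟨hxA, hxN⟩
  · rintro ⟨b, hb, hfg⟩
    obtain ⟨N, hsub, hNm, hN⟩ := exists_measurable_superset_of_null (ae_iff.1 hfg)
    exact ⟨N, hNm, hN, b, hb, fun x hx ↦ by_contra fun h ↦ hx.2 (hsub fun h' ↦ h (h' hx.1))⟩

theorem mem_FBall_self (hε : 0 < ε) : f ∈ FBall μ f A ε :=
  mem_FBall_iff_ae.2 ⟨0, hε, by simp⟩

theorem FBall_subset_FBall (hAF : A ≤ᵐ[μ] F) (hδε : δ ≤ ε) : FBall μ f F δ ⊆ FBall μ f A ε := by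
  intro g hg
  obtain ⟨b, hb, hfg⟩ := mem_FBall_iff_ae.1 hg
  refine mem_FBall_iff_ae.2 ⟨b, hb.trans_le hδε, ?_⟩
  filter_upwards [hAF, hfg] with x hx hfgx hxA using hfgx (hx hxA)

theorem exists_FBall_subset_of_mem (hf : f ∈ FBall μ g A ε) :
    ∃ δ > 0, FBall μ f A δ ⊆ FBall μ g A ε := by
  obtain ⟨b, hb, hgf⟩ := mem_FBall_iff_ae.1 hf
  refine ⟨ε - b, sub_pos.2 hb, fun h hh ↦ ?_⟩
  obtain ⟨c, hc, hfh⟩ := mem_FBall_iff_ae.1 hh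
  refine mem_FBall_iff_ae.2 ⟨b + c, by linarith, ?_⟩
  filter_upwards [hgf, hfh] with x hgfx hfhx hxA
  exact (abs_sub_le _ _ _).trans (add_le_add (hgfx hxA) (hfhx hxA))

theorem ae_le_of_FBall_subset_FBall (hA : MeasurableSet A) (hε : 0 < ε)
    (h : FBall μ f A ε ⊆ FBall μ f F δ) : F ≤ᵐ[μ] A := by
  let g : Mble X := ⟨f.1 + Aᶜ.indicator fun _ ↦ δ, f.2.add (measurable_const.indicator hA.compl)⟩
  have hg : g ∈ FBall μ f A ε :=
    mem_FBall_iff_ae.2 ⟨0, hε, .of_forall fun x hx ↦ by simp [g, hx]⟩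
  obtain ⟨b, hb, hfg⟩ := mem_FBall_iff_ae.1 (h hg)
  filter_upwards [hfg] with x hfgx hxF
  by_contra hxA
  have hδb : |δ| ≤ b := by simpa [g, show x ∉ A from hxA] using hfgx hxF
  exact (hb.trans_le (le_abs_self δ)).not_ge hδb

end FBall

section FTop

variable {X : Type*} [MeasurableSpace X] (μ : Measure X)

theorem isTopologicalBasis_FTop :
    @TopologicalSpace.IsTopologicalBasis (Mble X) (FTop μ)
      {S | ∃ (f : Mble X) (A : Set X) (ε : ℝ),
        MeasurableSet A ∧ μ A < ⊤ ∧ 0 < ε ∧ S = FBall μ f A ε} := by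
  let := FTop μ
  refine ⟨?_, ?_, rfl⟩
  · rintro _ ⟨g, A, ε, hA, hμA, -, rfl⟩ _ ⟨h, F, δ, hF, hμF, -, rfl⟩ f ⟨hfA, hfF⟩
    obtain ⟨ε', hε', hsubA⟩ := exists_FBall_subset_of_mem hfA
    obtain ⟨δ', hδ', hsubF⟩ := exists_FBall_subset_of_mem hfF
    have hmin : 0 < min ε' δ' := lt_min hε' hδ'
    refine ⟨FBall μ f (A ∪ F) (min ε' δ'),
      ⟨f, A ∪ F, min ε' δ', hA.union hF, measure_union_lt_top hμA hμF, hmin, rfl⟩,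
      mem_FBall_self hmin, subset_inter ?_ ?_⟩
    · exact (FBall_subset_FBall subset_union_left.eventuallyLE (min_le_left _ _)).trans hsubA
    · exact (FBall_subset_FBall subset_union_right.eventuallyLE (min_le_right _ _)).trans hsubF
  · exact sUnion_eq_univ_iff.2 fun f ↦
      ⟨_, ⟨f, ∅, 1, .empty, by simp, one_pos, rfl⟩, mem_FBall_self one_pos⟩

theorem hasBasis_nhds_FTop (f : Mble X) :
    (@nhds _ (FTop μ) f).HasBasis
      (fun p : Set X × ℝ ↦ MeasurableSet p.1 ∧ μ p.1 < ⊤ ∧ 0 < p.2)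
      fun p ↦ FBall μ f p.1 p.2 := by
  let := FTop μ
  refine ⟨fun U ↦ (isTopologicalBasis_FTop μ).mem_nhds_iff.trans ⟨?_, ?_⟩⟩
  · rintro ⟨_, ⟨g, A, ε, hA, hμA, -, rfl⟩, hf, hU⟩
    obtain ⟨δ, hδ, hsub⟩ := exists_FBall_subset_of_mem hf
    exact ⟨(A, δ), ⟨hA, hμA, hδ⟩, hsub.trans hU⟩
  · rintro ⟨⟨A, ε⟩, ⟨hA, hμA, hε⟩, hU⟩
    exact ⟨_, ⟨f, A, ε, hA, hμA, hε, rfl⟩, mem_FBall_self hε, hU⟩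

end FTop

section Hemifinite

variable {X : Type*} [MeasurableSpace X] {μ : Measure X}

theorem Hemifinite.firstCountableTopology (hμ : Hemifinite μ) :
    @FirstCountableTopology (Mble X) (FTop μ) := by
  let := FTop μ
  obtain ⟨A, hA, hcofinal⟩ := hμ
  have exists_ae_le {F : Set X} (hF : MeasurableSet F) (hμF : μ F < ⊤) : ∃ n, F ≤ᵐ[μ] A n := by
    simp only [ae_le_set]
    rcases eq_zero_or_pos (μ F) with h0 | hpos
    · exact ⟨0, measure_mono_null sdiff_subset h0⟩
    · exact hcofinal F hF hpos hμF
  refine ⟨fun f ↦ ?_⟩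
  have hbasis : (𝓝 f).HasBasis (fun _ : ℕ × ℕ ↦ True)
      fun p ↦ FBall μ f (A p.1) (1 / ((p.2 : ℝ) + 1)) := by
    refine (hasBasis_nhds_FTop μ f).to_hasBasis ?_ ?_
    · rintro ⟨F, ε⟩ ⟨hF, hμF, hε⟩
      obtain ⟨n, hn⟩ := exists_ae_le hF hμF
      obtain ⟨m, hm⟩ := exists_nat_one_div_lt hε
      exact ⟨(n, m), trivial, FBall_subset_FBall hn hm.le⟩
    · rintro ⟨n, m⟩ -
      exact ⟨(A n, 1 / ((m : ℝ) + 1)), ⟨(hA n).1, (hA n).2.2, Nat.one_div_pos_of_nat⟩, Subset.rfl⟩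
  exact Filter.HasCountableBasis.isCountablyGenerated ⟨hbasis, to_countable _⟩

theorem hemifinite_of_isCountablyGenerated_nhds {f : Mble X}
    (hfin : ∃ C, MeasurableSet C ∧ 0 < μ C ∧ μ C < ⊤)
    (hf : (@nhds _ (FTop μ) f).IsCountablyGenerated) : Hemifinite μ := by
  obtain ⟨C, hC, hCpos, hCtop⟩ := hfin
  obtain ⟨p, hp, hbasis⟩ := (hasBasis_nhds_FTop μ f).exists_antitone_subbasis
  -- The sets `(p n).1` may be null; adding `C` makes their measure positive.
  refine ⟨fun n ↦ (p n).1 ∪ C, fun n ↦ ⟨(hp n).1.union hC,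
    hCpos.trans_le (measure_mono subset_union_right), measure_union_lt_top (hp n).2.1 hCtop⟩, ?_⟩
  intro F hF _ hFtop
  obtain ⟨n, hn⟩ := hbasis.mem_iff.1
    ((hasBasis_nhds_FTop μ f).mem_of_mem (i := (F, 1)) ⟨hF, hFtop, one_pos⟩)
  have hFn : F ≤ᵐ[μ] (p n).1 := ae_le_of_FBall_subset_FBall (hp n).1 (hp n).2.2 hn
  exact ⟨n, ae_le_set.1 (hFn.trans subset_union_left.eventuallyLE)⟩

end Hemifinite

theorem exists_subset_pos_lt_top {X : Type*} [MeasurableSpace X] {μ : Measure X} {A : Set X}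
    (hA : MeasurableSet A) (hpos : 0 < μ A)
    (hsub : μ A = ⊤ → ∃ B, B ⊆ A ∧ MeasurableSet B ∧ 0 < μ B ∧ μ B < ⊤) :
    ∃ B, B ⊆ A ∧ MeasurableSet B ∧ 0 < μ B ∧ μ B < ⊤ :=
  (eq_or_ne (μ A) ⊤).elim hsub fun h ↦ ⟨A, Subset.rfl, hA, hpos, h.lt_top⟩

theorem stmt16_general {X : Type*} [MeasurableSpace X] (μ : Measure X)
    (hfin : ∃ C, MeasurableSet C ∧ 0 < μ C ∧ μ C < ⊤) :
    Hemifinite μ ↔ @FirstCountableTopology (Mble X) (FTop μ) :=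
  ⟨Hemifinite.firstCountableTopology, fun h ↦
    hemifinite_of_isCountablyGenerated_nhds (f := zeroM) hfin (h.nhds_generated_countable zeroM)⟩

/-- `μ` is hemifinite iff `M_F` is first countable. -/
theorem stmt16 {X : Type*} [MeasurableSpace X] (μ : Measure X)
    (hpos : 0 < μ Set.univ)
    (hsub : ∀ A : Set X, MeasurableSet A → μ A = ⊤ →
      ∃ B, B ⊆ A ∧ MeasurableSet B ∧ 0 < μ B ∧ μ B < ⊤) :
    Hemifinite μ ↔ @FirstCountableTopology (Mble X) (FTop μ) :=
  stmt16_general μ <|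
    (exists_subset_pos_lt_top .univ hpos (hsub univ .univ)).imp fun _ hB ↦ hB.2
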